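/- Let k ≥ 1 be an integer and c > 0. There exists a constant C, depending only on k and c, such that the following holds. Let G be a finite graph satisfying ∇_r(G) ≤ c·(r+1)^k for all integers r ≥ 0, let W, D be sets of vertices of G with D dominating W, let ε ∈ (0,1), and set K = ⌈C·ε^{−(2k+6)}·(1 + log(1/ε))^{2k+5}⌉. Then every K-locally minimal subset L ⊆ D that dominates W satisfies |L| ≤ (1 + ε)·min{|S| : S ⊆ D and S dominates W}. -/

import Mathlib

/-- A graph is `t`-shallow if some vertex reaches every other vertex by a path of at most
`t` edges (graph radius at most `t`). -/
def IsShallowGraph {V : Type*} (G : SimpleGraph V) (t : ℕ) : Prop :=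
  ∃ h : V, ∀ v : V, G.Reachable h v ∧ G.dist h v ≤ t

/-- `H` is a `t`-shallow minor of `G`. -/
def IsShallowMinor {V W : Type*} (G : SimpleGraph V) (H : SimpleGraph W) (t : ℕ) : Prop :=
  ∃ cl : W → Set V,
    (Pairwise fun w w' => Disjoint (cl w) (cl w')) ∧
    (∀ w, IsShallowGraph (G.induce (cl w)) t) ∧
    (∀ w w', H.Adj w w' → ∃ u ∈ cl w, ∃ v ∈ cl w', G.Adj u v)

/-- `∇_r(G) ≤ x`. -/
def NablaLE {V : Type*} (G : SimpleGraph V) (r : ℕ) (x : ℝ) : Prop :=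
  ∀ (W : Type) [Fintype W] (H : SimpleGraph W),
    IsShallowMinor G H r → (H.edgeSet.ncard : ℝ) ≤ x * (Fintype.card W : ℝ)

/-- `D` dominates `W` in `G`: every vertex of `W` is in `D` or adjacent to a vertex of `D`. -/
def Dominates {V : Type*} (G : SimpleGraph V) (D W : Set V) : Prop :=
  ∀ w ∈ W, w ∈ D ∨ ∃ u ∈ D, G.Adj u w


open Classical in
/-- outer boundary of `A` inside `X` -/
noncomputable def bdy {V : Type} (H : SimpleGraph V) (X A : Finset V) : Finset V :=
  X.filter (fun y => y ∉ A ∧ ∃ x ∈ A, H.Adj x y)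

/-- reachability inside `Z` in at most `t` steps -/
def Rch {V : Type} (G : SimpleGraph V) (Z : Set V) (t : ℕ) (x y : V) : Prop :=
  ∃ p : G.Walk x y, p.length ≤ t ∧ ∀ z ∈ p.support, z ∈ Z

/-- pairwise touching shallow disjoint families -/
structure Fam {V : Type} (G : SimpleGraph V) (X : Finset V) (r : ℕ)
    (F : Finset (Finset V)) : Prop where
  sub : ∀ Z ∈ F, Z ⊆ X
  shal : ∀ Z ∈ F, ∃ v ∈ Z, ∀ z ∈ Z, Rch G (Z : Set V) r v z
  disj : ∀ Z ∈ F, ∀ Z' ∈ F, Z ≠ Z' → Disjoint Z Z'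
  adj : ∀ Z ∈ F, ∀ Z' ∈ F, Z ≠ Z' → ∃ x ∈ Z, ∃ y ∈ Z', G.Adj x y

lemma Rch.refl {V : Type} {G : SimpleGraph V} {Z : Set V} {t : ℕ} {x : V} (hx : x ∈ Z) :
    Rch G Z t x x := ⟨.nil, by simp, by simpa using hx⟩

lemma Rch.symm {V : Type} {G : SimpleGraph V} {Z : Set V} {t : ℕ} {x y : V}
    (h : Rch G Z t x y) : Rch G Z t y x := by
  obtain ⟨p, hp, hs⟩ := h
  exact ⟨p.reverse, by simpa using hp, by simpa using hs⟩

lemma Rch.trans {V : Type} {G : SimpleGraph V} {Z : Set V} {t s : ℕ} {x y z : V}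
    (h : Rch G Z t x y) (h' : Rch G Z s y z) : Rch G Z (t + s) x z := by
  obtain ⟨p, hp, hs⟩ := h
  obtain ⟨q, hq, hs'⟩ := h'
  refine ⟨p.append q, by simp; omega, ?_⟩
  intro w hw
  rw [SimpleGraph.Walk.mem_support_append_iff] at hw
  rcases hw with hw | hw
  · exact hs w hw
  · exact hs' w hw

lemma Rch.mono {V : Type} {G : SimpleGraph V} {Z Z' : Set V} {t t' : ℕ} {x y : V}
    (h : Rch G Z t x y) (hZ : Z ⊆ Z') (ht : t ≤ t') : Rch G Z' t' x y := by
  obtain ⟨p, hp, hs⟩ := h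
  exact ⟨p, hp.trans ht, fun z hz => hZ (hs z hz)⟩

lemma Rch.step {V : Type} {G : SimpleGraph V} {Z : Set V} {x y : V}
    (hx : x ∈ Z) (hy : y ∈ Z) (h : G.Adj x y) : Rch G Z 1 x y :=
  ⟨.cons h .nil, by simp, by simp [hx, hy]⟩

lemma Rch.mem_right {V : Type} {G : SimpleGraph V} {Z : Set V} {t : ℕ} {x y : V}
    (h : Rch G Z t x y) : y ∈ Z := by
  obtain ⟨p, hp, hs⟩ := h
  exact hs _ p.end_mem_support

/-- shallowness in the sense of `Defs` -/
lemma shallow_of_rch {V : Type} {G : SimpleGraph V} {Z : Set V} {t : ℕ} {v : V} (hv : v ∈ Z)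
    (h : ∀ z ∈ Z, Rch G Z t v z) : IsShallowGraph (G.induce Z) t := by
  refine ⟨⟨v, hv⟩, ?_⟩
  rintro ⟨z, hz⟩
  obtain ⟨p, hp, hs⟩ := h z hz
  refine ⟨⟨p.induce Z hs⟩, ?_⟩
  refine (SimpleGraph.dist_le (p.induce Z hs)).trans ?_
  have : (p.induce Z hs).length = p.length := by
    have h1 := congrArg SimpleGraph.Walk.length (SimpleGraph.Walk.map_induce p hs)
    rw [SimpleGraph.Walk.length_map] at h1
    exact h1
  omega

/-- a hub: given points reachable from v, a small shallow set -/
lemma exists_hub {V : Type} {G : SimpleGraph V} {R : Finset V} {r : ℕ} {v : V} (hv : v ∈ R)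
    (Y : Finset V) (hY : ∀ y ∈ Y, Rch G (R : Set V) r v y) :
    ∃ Z : Finset V, Z ⊆ R ∧ Y ⊆ Z ∧ Z.card ≤ 1 + Y.card * (r + 1) ∧ v ∈ Z ∧
      ∀ z ∈ Z, Rch G (Z : Set V) r v z := by
  classical
  induction Y using Finset.induction_on with
  | empty =>
    refine ⟨{v}, by simpa using hv, by simp, by simp, by simp, ?_⟩
    intro z hz
    simp at hz
    subst hz
    exact Rch.refl (by simp)
  | insert y Y hy ih =>
    obtain ⟨Z, h1, h2, h3, h4, h5⟩ := ih (fun y hy => hY y (by simp [hy]))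
    obtain ⟨p, hp, hs⟩ := hY y (by simp)
    refine ⟨Z ∪ p.support.toFinset, ?_, ?_, ?_, by simp [h4], ?_⟩
    · intro z hz
      simp at hz
      rcases hz with hz | hz
      · exact h1 hz
      · exact hs z hz
    · intro z hz
      simp at hz
      rcases hz with rfl | hz
      · simp
      · simp [h2 hz]
    · refine (Finset.card_union_le _ _).trans ?_
      have : p.support.toFinset.card ≤ r + 1 := by
        refine (List.toFinset_card_le _).trans ?_
        simp; omega
      rw [Finset.card_insert_of_notMem hy]
      nlinarith
    · intro z hz
      simp at hz
      rcases hz with hz | hz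
      · exact (h5 z hz).mono (by simp) le_rfl
      · refine ⟨p.takeUntil z hz, (p.length_takeUntil_le_length hz).trans hp, ?_⟩
        intro w hw
        have := p.support_takeUntil_subset_support hz hw
        simp [this]

/-- ball growth -/
lemma ball_growth {V : Type} {H : SimpleGraph V} {R : Finset V} {δ n : ℝ} {v : V}
    (hδ : 0 < δ) (hv : v ∈ R)
    (hexp : ∀ A ⊆ R, A.Nonempty → (A.card : ℝ) ≤ n → δ * A.card < (bdy H R A).card) (t : ℕ) :
    ∃ B ⊆ R, (∀ b ∈ B, Rch H (R : Set V) t v b) ∧ B.Nonempty ∧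
      ((1 + δ) ^ t ≤ B.card ∨ n < B.card) := by
  classical
  induction t with
  | zero =>
    refine ⟨{v}, by simpa using hv, ?_, by simp, ?_⟩
    · intro b hb
      simp at hb
      subst hb
      exact Rch.refl (by simpa using hv)
    · simp
  | succ t ih =>
    obtain ⟨B, h1, h2, h3, h4⟩ := ih
    by_cases hn : n < B.card
    · exact ⟨B, h1, fun b hb => (h2 b hb).mono le_rfl (by omega), h3, Or.inr hn⟩
    · have h4 := h4.resolve_right hn
      have h5 := hexp B h1 h3 (not_lt.1 hn)
      refine ⟨B ∪ bdy H R B, ?_, ?_, ?_, Or.inl ?_⟩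
      · exact Finset.union_subset h1 (Finset.filter_subset _ _)
      · intro b hb
        rw [Finset.mem_union] at hb
        rcases hb with hb | hb
        · exact (h2 b hb).mono le_rfl (by omega)
        · simp only [bdy, Finset.mem_filter] at hb
          obtain ⟨hbR, hbB, x, hx, hxb⟩ := hb
          exact (h2 x hx).trans (Rch.step (by simpa using h1 hx) (by simpa using hbR) hxb)
      · exact h3.mono Finset.subset_union_left
      · rw [Finset.card_union_of_disjoint]
        · push_cast
          rw [pow_succ]
          nlinarith
        · rw [Finset.disjoint_left]
          intro x hx hx'
          simp [bdy] at hx'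
          exact hx'.2.1 hx

/-- configurations in the separator argument -/
structure Cfg {V : Type} (H : SimpleGraph V) (X : Finset V) (r s : ℕ) (δ : ℝ)
    (U : Finset V) (F : Finset (Finset V)) : Prop where
  fam : Fam H X r F
  sz : ∀ Z ∈ F, Z.card ≤ s
  usub : U ⊆ X
  ucard : 4 * U.card ≤ 3 * X.card
  udisj : ∀ Z ∈ F, Disjoint U Z
  ubd : ∀ B : Finset V, B ⊆ bdy H X U → (∀ Z ∈ F, Disjoint B Z) → (B.card : ℝ) ≤ δ / 2 * U.card

lemma mem_bdy {V : Type} {H : SimpleGraph V} {X A : Finset V} {y : V} :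
    y ∈ bdy H X A ↔ y ∈ X ∧ y ∉ A ∧ ∃ x ∈ A, H.Adj x y := by
  simp [bdy]

lemma sep_comb {V : Type} [Fintype V] (H : SimpleGraph V) (X : Finset V) (δ : ℝ) (t h : ℕ)
    (hδ : 0 < δ) (hδ1 : δ ≤ 1)
    (hexp : ∀ A ⊆ X, A.Nonempty → 4 * A.card ≤ 3 * X.card → δ * A.card < (bdy H X A).card)
    (hF : ∀ F, Fam H X (2 * t) F → F.card < h)
    (ht : (X.card : ℝ) < (1 + δ / 2) ^ t)
    (hs : 16 * ((h : ℝ) * (1 + h * (2 * t + 1))) ≤ δ * X.card) (hX : X.Nonempty) : False := by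
  classical
  set s : ℕ := 1 + h * (2 * t + 1) with hsdef
  set n := X.card with hn
  have hn0 : 0 < n := hX.card_pos
  -- maximal configuration
  let P : Finset V × Finset (Finset V) → Prop := fun p => Cfg H X (2 * t) s δ p.1 p.2
  have hne : (Finset.univ.filter P).Nonempty := by
    refine ⟨(∅, ∅), ?_⟩
    simp only [Finset.mem_filter, Finset.mem_univ, true_and]
    refine ⟨⟨?_, ?_, ?_, ?_⟩, ?_, ?_, ?_, ?_, ?_⟩ <;> try simp
    intro B hB
    have : B = ∅ := by
      rw [← Finset.subset_empty]
      refine hB.trans ?_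
      intro x hx
      simp [mem_bdy] at hx
    simp [this]
  obtain ⟨⟨U, F⟩, hUF, hmax⟩ :=
    Finset.exists_max_image _ (fun p : Finset V × Finset (Finset V) => p.1.card * (h + 1) + p.2.card) hne
  have hC : Cfg H X (2 * t) s δ U F := by simpa [P] using hUF
  have hmax' : ∀ U' F', Cfg H X (2 * t) s δ U' F' →
      U'.card * (h + 1) + F'.card ≤ U.card * (h + 1) + F.card := by
    intro U' F' h'
    exact hmax (U', F') (by simpa [P] using h')
  have hFh : F.card < h := hF F hC.fam
  set M : Finset V := F.biUnion id with hM
  have memM : ∀ {x}, x ∈ M ↔ ∃ Z ∈ F, x ∈ Z := by intro x; simp [hM]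
  have hMc : M.card ≤ h * s := by
    refine (Finset.card_biUnion_le_card_mul _ _ s (fun Z hZ => hC.sz Z hZ)).trans ?_
    exact Nat.mul_le_mul_right _ hFh.le
  have hMr : 16 * (M.card : ℝ) ≤ δ * n := by
    have : (M.card : ℝ) ≤ (h : ℝ) * (1 + h * (2 * t + 1)) := by
      have := hMc
      rw [hsdef] at this
      exact_mod_cast this
    linarith
  have hMn : 16 * (M.card : ℝ) ≤ n := by
    have : (0 : ℝ) ≤ n := by positivity
    nlinarith
  have hUc : 8 * (U.card : ℝ) ≤ n := by
    by_cases hU : U.Nonempty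
    · have h1 := hexp U hC.usub hU hC.ucard
      have h2 := hC.ubd (bdy H X U \ M) Finset.sdiff_subset (by
        intro Z hZ
        rw [Finset.disjoint_left]
        intro x hx hxZ
        rw [Finset.mem_sdiff] at hx
        exact hx.2 (memM.2 ⟨Z, hZ, hxZ⟩))
      have h3 : (bdy H X U).card ≤ (bdy H X U \ M).card + M.card := by
        have := Finset.le_card_sdiff M (bdy H X U)
        omega
      have h3' : ((bdy H X U).card : ℝ) ≤ (bdy H X U \ M).card + M.card := by exact_mod_cast h3
      have : δ * (8 * (U.card : ℝ)) ≤ δ * n := by linarith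
      exact le_of_mul_le_mul_left this hδ
    · rw [Finset.not_nonempty_iff_eq_empty] at hU
      simp [hU]
  set R : Finset V := X \ (U ∪ M) with hR
  have memR : ∀ {x}, x ∈ R ↔ x ∈ X ∧ x ∉ U ∧ x ∉ M := by intro x; simp [hR]
  have hRX : R ⊆ X := Finset.sdiff_subset
  have hRne : R.Nonempty := by
    rw [← Finset.card_pos]
    have h1 : n - (U ∪ M).card ≤ R.card := Finset.le_card_sdiff (U ∪ M) X
    have h2 := Finset.card_union_le U M
    have h3 : 8 * U.card ≤ n := by exact_mod_cast hUc
    have h4 : 16 * M.card ≤ n := by exact_mod_cast hMn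
    omega
  have hRexp : ∀ A ⊆ R, A.Nonempty → (A.card : ℝ) ≤ 5 / 8 * n →
      δ / 2 * A.card < (bdy H R A).card := by
    intro A hA hAne hAc
    by_contra hcon
    push Not at hcon
    have hdis : Disjoint U A := by
      rw [Finset.disjoint_left]
      intro x hx hxA
      exact (memR.1 (hA hxA)).2.1 hx
    have hcard : (U ∪ A).card = U.card + A.card := Finset.card_union_of_disjoint hdis
    have := hmax' (U ∪ A) F ⟨hC.fam, hC.sz, Finset.union_subset hC.usub (hA.trans hRX), ?_, ?_, ?_⟩
    · have := hAne.card_pos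
      nlinarith
    · have : (4 * ((U ∪ A).card : ℝ)) ≤ 3 * n := by rw [hcard]; push_cast; linarith
      exact_mod_cast this
    · intro Z hZ
      rw [Finset.disjoint_union_left]
      refine ⟨hC.udisj Z hZ, ?_⟩
      rw [Finset.disjoint_left]
      intro x hx hxZ
      exact (memR.1 (hA hx)).2.2 (memM.2 ⟨Z, hZ, hxZ⟩)
    · intro B hB hBF
      have h1 := hC.ubd (B ∩ bdy H X U) Finset.inter_subset_right
        (fun Z hZ => (hBF Z hZ).mono_left Finset.inter_subset_left)
      have h2 : B ⊆ (B ∩ bdy H X U) ∪ bdy H R A := by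
        intro y hy
        obtain ⟨hyX, hyUA, x, hx, hxy⟩ := mem_bdy.1 (hB hy)
        rw [Finset.mem_union, not_or] at hyUA
        rw [Finset.mem_union] at hx ⊢
        rcases hx with hx | hx
        · left
          exact Finset.mem_inter.2 ⟨hy, mem_bdy.2 ⟨hyX, hyUA.1, x, hx, hxy⟩⟩
        · right
          refine mem_bdy.2 ⟨memR.2 ⟨hyX, hyUA.1, ?_⟩, hyUA.2, x, hx, hxy⟩
          intro hyM
          obtain ⟨Z, hZ, hyZ⟩ := memM.1 hyM
          exact Finset.disjoint_left.1 (hBF Z hZ) hy hyZ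
      have h3 := (Finset.card_le_card h2).trans (Finset.card_union_le _ _)
      have h3' : (B.card : ℝ) ≤ (B ∩ bdy H X U).card + (bdy H R A).card := by exact_mod_cast h3
      rw [hcard]
      push_cast
      linarith
  have hRr : ∀ v ∈ R, ∀ w ∈ R, Rch H (R : Set V) (2 * t) v w := by
    intro v hv w hw
    obtain ⟨B, hB1, hB2, -, hB3⟩ := ball_growth (by positivity) hv hRexp t
    obtain ⟨B', hB1', hB2', -, hB3'⟩ := ball_growth (by positivity) hw hRexp t
    have big : ∀ B ⊆ R, ((1 + δ / 2) ^ t ≤ (B.card : ℝ) ∨ 5 / 8 * (n : ℝ) < B.card) →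
        5 / 8 * (n : ℝ) < B.card := by
      intro B hB h
      refine h.resolve_left ?_
      intro h
      have h1 := Finset.card_le_card (hB.trans hRX)
      have : (B.card : ℝ) ≤ n := by exact_mod_cast h1
      linarith
    have b1 := big B hB1 hB3
    have b2 := big B' hB1' hB3'
    have : ¬ Disjoint B B' := by
      intro hd
      have h1 := Finset.card_union_of_disjoint hd
      have h2 := Finset.card_le_card (Finset.union_subset (hB1.trans hRX) (hB1'.trans hRX))
      rw [h1] at h2
      have h3 : (B.card : ℝ) + B'.card ≤ n := by exact_mod_cast h2
      have : (0 : ℝ) < n := by exact_mod_cast hn0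
      linarith
    rw [Finset.not_disjoint_iff] at this
    obtain ⟨z, hz, hz'⟩ := this
    rw [two_mul]
    exact (hB2 z hz).trans (hB2' z hz').symm
  have hnb : ∀ Z ∈ F, ∃ y ∈ R, ∃ x ∈ Z, H.Adj x y := by
    intro Z hZ
    by_contra hcon
    push Not at hcon
    have hcard : (U ∪ Z).card = U.card + Z.card := Finset.card_union_of_disjoint (hC.udisj Z hZ)
    have hZM : Z ⊆ M := fun x hx => memM.2 ⟨Z, hZ, hx⟩
    have := hmax' (U ∪ Z) (F.erase Z) ⟨⟨?_, ?_, ?_, ?_⟩, ?_, ?_, ?_, ?_, ?_⟩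
    · obtain ⟨v, hv, -⟩ := hC.fam.shal Z hZ
      have h1 : 0 < Z.card := Finset.card_pos.2 ⟨v, hv⟩
      have h2 := Finset.card_erase_of_mem hZ
      rw [hcard] at this
      nlinarith
    · exact fun Z' hZ' => hC.fam.sub Z' (Finset.mem_of_mem_erase hZ')
    · exact fun Z' hZ' => hC.fam.shal Z' (Finset.mem_of_mem_erase hZ')
    · exact fun Z' hZ' Z'' hZ'' => hC.fam.disj Z' (Finset.mem_of_mem_erase hZ') Z''
        (Finset.mem_of_mem_erase hZ'')
    · exact fun Z' hZ' Z'' hZ'' => hC.fam.adj Z' (Finset.mem_of_mem_erase hZ') Z''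
        (Finset.mem_of_mem_erase hZ'')
    · exact fun Z' hZ' => hC.sz Z' (Finset.mem_of_mem_erase hZ')
    · exact Finset.union_subset hC.usub (hC.fam.sub Z hZ)
    · have h1 := Finset.card_le_card hZM
      have h3 : 8 * U.card ≤ n := by exact_mod_cast hUc
      have h4 : 16 * M.card ≤ n := by exact_mod_cast hMn
      omega
    · intro Z' hZ'
      rw [Finset.mem_erase] at hZ'
      rw [Finset.disjoint_union_left]
      exact ⟨hC.udisj Z' hZ'.2, hC.fam.disj Z hZ Z' hZ'.2 hZ'.1.symm⟩
    · intro B hB hBF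
      have hBM : ∀ y ∈ B, y ∉ M := by
        intro y hy hyM
        obtain ⟨Z', hZ', hyZ'⟩ := memM.1 hyM
        by_cases hZZ : Z' = Z
        · subst hZZ
          exact (mem_bdy.1 (hB hy)).2.1 (Finset.mem_union_right _ hyZ')
        · exact Finset.disjoint_left.1 (hBF Z' (Finset.mem_erase.2 ⟨hZZ, hZ'⟩)) hy hyZ'
      have h1 := hC.ubd B ?_ ?_
      · rw [hcard]
        push_cast
        have : 0 ≤ δ / 2 * (Z.card : ℝ) := by positivity
        linarith
      · intro y hy
        obtain ⟨hyX, hyUA, x, hx, hxy⟩ := mem_bdy.1 (hB hy)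
        rw [Finset.mem_union, not_or] at hyUA
        rw [Finset.mem_union] at hx
        rcases hx with hx | hx
        · exact mem_bdy.2 ⟨hyX, hyUA.1, x, hx, hxy⟩
        · exact absurd hxy (hcon y (memR.2 ⟨hyX, hyUA.1, hBM y hy⟩) x hx)
      · intro Z' hZ'
        rw [Finset.disjoint_left]
        intro y hy hyZ'
        exact hBM y hy (memM.2 ⟨Z', hZ', hyZ'⟩)
  -- add a new cluster
  obtain ⟨v, hv⟩ := hRne
  have : Nonempty V := ⟨v⟩
  choose! y hyR x hxZ hxy using hnb
  obtain ⟨N, hN1, hN2, hN3, hN4, hN5⟩ := exists_hub (r := 2 * t) hv (F.image y) (by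
    intro z hz
    obtain ⟨Z, hZ, rfl⟩ := Finset.mem_image.1 hz
    exact hRr v hv _ (hyR Z hZ))
  have hNd : ∀ Z ∈ F, Disjoint N Z := by
    intro Z hZ
    rw [Finset.disjoint_left]
    intro z hz hzZ
    exact (memR.1 (hN1 hz)).2.2 (memM.2 ⟨Z, hZ, hzZ⟩)
  have hNF : N ∉ F := by
    intro hNF
    exact (memR.1 (hN1 hN4)).2.2 (memM.2 ⟨N, hNF, hN4⟩)
  have hNa : ∀ Z ∈ F, ∃ x ∈ Z, ∃ y ∈ N, H.Adj x y := by
    intro Z hZ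
    exact ⟨x Z, hxZ Z hZ, y Z, hN2 (Finset.mem_image_of_mem _ hZ), hxy Z hZ⟩
  have := hmax' U (insert N F) ⟨⟨?_, ?_, ?_, ?_⟩, ?_, hC.usub, hC.ucard, ?_, ?_⟩
  · rw [Finset.card_insert_of_notMem hNF] at this
    omega
  · intro Z hZ
    rcases Finset.mem_insert.1 hZ with rfl | hZ
    · exact hN1.trans hRX
    · exact hC.fam.sub Z hZ
  · intro Z hZ
    rcases Finset.mem_insert.1 hZ with rfl | hZ
    · exact ⟨v, hN4, hN5⟩
    · exact hC.fam.shal Z hZ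
  · intro Z hZ Z' hZ' hne
    rcases Finset.mem_insert.1 hZ with rfl | h1 <;> rcases Finset.mem_insert.1 hZ' with rfl | h2
    · exact absurd rfl hne
    · exact hNd Z' h2
    · exact (hNd Z h1).symm
    · exact hC.fam.disj Z h1 Z' h2 hne
  · intro Z hZ Z' hZ' hne
    rcases Finset.mem_insert.1 hZ with rfl | h1 <;> rcases Finset.mem_insert.1 hZ' with rfl | h2
    · exact absurd rfl hne
    · obtain ⟨a, ha, b, hb, hab⟩ := hNa Z' h2
      exact ⟨b, hb, a, ha, hab.symm⟩
    · exact hNa Z h1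
    · exact hC.fam.adj Z h1 Z' h2 hne
  · intro Z hZ
    rcases Finset.mem_insert.1 hZ with rfl | hZ
    · refine hN3.trans ?_
      have : (F.image y).card ≤ h := Finset.card_image_le.trans hFh.le
      rw [hsdef]
      exact Nat.add_le_add_left (Nat.mul_le_mul_right _ this) _
    · exact hC.sz Z hZ
  · intro Z hZ
    rcases Finset.mem_insert.1 hZ with rfl | hZ
    · rw [Finset.disjoint_left]
      intro x hx hxN
      exact (memR.1 (hN1 hxN)).2.1 hx
    · exact hC.udisj Z hZ
  · intro B hB hBF
    exact hC.ubd B hB (fun Z hZ => hBF Z (Finset.mem_insert_of_mem hZ))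

lemma ev_log (β A : ℝ) (hβ : 0 < β) :
    ∃ x0 : ℝ, 1 ≤ x0 ∧ ∀ x ≥ x0, 7 * (2 * Real.log x + 1) ≤ x ^ β ∧ A ≤ x ^ β := by
  have h1 : ∀ᶠ x : ℝ in Filter.atTop, A ≤ x ^ β := (tendsto_rpow_atTop hβ).eventually_ge_atTop A
  have h1' : ∀ᶠ x : ℝ in Filter.atTop, 14 ≤ x ^ β := (tendsto_rpow_atTop hβ).eventually_ge_atTop 14
  have h2 := (isLittleO_log_rpow_atTop hβ).bound (show (0 : ℝ) < 1 / 28 by norm_num)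
  have h3 := h1.and (h1'.and (h2.and (Filter.eventually_ge_atTop (1 : ℝ))))
  obtain ⟨x0, hx0⟩ := Filter.eventually_atTop.1 h3
  refine ⟨max x0 1, le_max_right _ _, fun x hx => ?_⟩
  obtain ⟨a, b, c, d⟩ := hx0 x ((le_max_left _ _).trans hx)
  refine ⟨?_, a⟩
  have e : 0 ≤ x ^ β := by positivity
  rw [Real.norm_eq_abs, Real.norm_eq_abs, abs_of_nonneg e] at c
  have := le_abs_self (Real.log x)
  linarith

lemma num_sep (k : ℕ) (c : ℝ) (hc : 0 < c) :
    ∃ n0 : ℕ, 1 ≤ n0 ∧ ∀ n : ℕ, n0 ≤ n →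
      (n : ℝ) ^ (-(1 / (2 * (k : ℝ) + 6))) ≤ 1 / 8 ∧
      ∃ t h : ℕ, (n : ℝ) < (1 + (n : ℝ) ^ (-(1 / (2 * (k : ℝ) + 6))) / 2) ^ t ∧
        2 * c * (((2 * t : ℕ) : ℝ) + 1) ^ k + 1 < h ∧
        16 * ((h : ℝ) * (1 + h * (2 * t + 1))) ≤ (n : ℝ) ^ (-(1 / (2 * (k : ℝ) + 6))) * n := by
  set γ : ℝ := 1 / (2 * (k : ℝ) + 6) with hγ
  set α : ℝ := 1 / (2 * (k : ℝ) + 2) with hα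
  have hγ0 : 0 < γ := by positivity
  have hα0 : 0 < α := by positivity
  have hβ : 0 < α - γ := by
    rw [sub_pos, hγ, hα]
    apply one_div_lt_one_div_of_lt <;> [positivity; linarith]
  obtain ⟨x0, hx01, hx0⟩ := ev_log (α - γ) (32 * (2 * c + 2) ^ 2) hβ
  obtain ⟨x1, hx11, hx1⟩ := ev_log γ 8 hγ0
  refine ⟨⌈max x0 x1⌉₊, ?_, ?_⟩
  · rw [Nat.one_le_ceil_iff]
    exact lt_of_lt_of_le one_pos (hx01.trans (le_max_left _ _))
  intro n hn
  have hn' : max x0 x1 ≤ n := Nat.ceil_le.1 hn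
  obtain ⟨e1, e2⟩ := hx0 n ((le_max_left _ _).trans hn')
  obtain ⟨-, e3⟩ := hx1 n ((le_max_right _ _).trans hn')
  have hn1 : (1 : ℝ) ≤ n := hx01.trans ((le_max_left _ _).trans hn')
  have hnp : (0 : ℝ) < n := by linarith
  have hg : (n : ℝ) ^ (-γ) = ((n : ℝ) ^ γ)⁻¹ := Real.rpow_neg hnp.le _
  set g : ℝ := (n : ℝ) ^ γ with hgdef
  have hg8 : 8 ≤ g := e3
  have hg0 : 0 < g := by linarith
  rw [hg]
  refine ⟨?_, ?_⟩
  · rw [one_div]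
    exact inv_anti₀ (by norm_num) hg8
  set T : ℕ := ⌈2 * g⌉₊ with hT
  set l : ℕ := Nat.log 2 n + 1 with hl
  set t : ℕ := T * l with ht
  have hT1 : 2 * g ≤ T := Nat.le_ceil _
  have hT2 : (T : ℝ) ≤ 2 * g + 1 := (Nat.ceil_lt_add_one (by positivity)).le
  have hpow : (n : ℝ) < (1 + g⁻¹ / 2) ^ t := by
    have h1 : (2 : ℝ) ≤ (1 + g⁻¹ / 2) ^ T := by
      have hb := one_add_mul_le_pow (a := g⁻¹ / 2) (by have : 0 < g⁻¹ := by positivity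
                                                       linarith) T
      have : 1 ≤ (T : ℝ) * (g⁻¹ / 2) := by
        calc (1 : ℝ) = (2 * g) * (g⁻¹ / 2) := by field_simp
          _ ≤ _ := by gcongr
      linarith
    have h2 : n < 2 ^ l := Nat.lt_pow_succ_log_self (by norm_num) n
    have h2' : (n : ℝ) < 2 ^ l := by exact_mod_cast h2
    calc (n : ℝ) < 2 ^ l := h2'
      _ ≤ ((1 + g⁻¹ / 2) ^ T) ^ l := by gcongr
      _ = _ := by rw [ht, pow_mul]
  have hl' : (l : ℝ) ≤ 2 * Real.log n + 1 := by
    have h1 : 2 ^ (Nat.log 2 n) ≤ n := Nat.pow_log_le_self 2 (by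
      rintro rfl
      norm_num at hn1)
    have h2 : (2 : ℝ) ^ (Nat.log 2 n) ≤ n := by exact_mod_cast h1
    have h3 := Real.log_le_log (by positivity) h2
    rw [Real.log_pow] at h3
    have h4 : (1 : ℝ) / 2 ≤ Real.log 2 := by have := Real.log_two_gt_d9; linarith
    have h5 : (Nat.log 2 n : ℝ) * (1 / 2) ≤ (Nat.log 2 n : ℝ) * Real.log 2 := by gcongr
    rw [hl]
    push_cast
    linarith
  have hl1 : (1 : ℝ) ≤ l := by rw [hl]; push_cast; linarith [Nat.cast_nonneg (α := ℝ) (Nat.log 2 n)]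
  set y : ℝ := 2 * (t : ℝ) + 1 with hy
  have hy1 : 1 ≤ y := by rw [hy]; linarith [Nat.cast_nonneg (α := ℝ) t]
  have hyn : y ≤ (n : ℝ) ^ α := by
    have h1 : y ≤ g * (7 * (2 * Real.log n + 1)) := by
      have : y ≤ g * (7 * l) := by
        rw [hy, ht]
        push_cast
        have : (T : ℝ) * l ≤ (3 * g) * l := by gcongr; linarith
        nlinarith
      refine this.trans ?_
      gcongr
    calc y ≤ g * (7 * (2 * Real.log n + 1)) := h1
      _ ≤ g * (n : ℝ) ^ (α - γ) := by gcongr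
      _ = (n : ℝ) ^ α := by rw [hgdef, ← Real.rpow_add hnp]; congr 1; ring
  refine ⟨t, ⌊2 * c * y ^ k + 1⌋₊ + 1, hpow, ?_, ?_⟩
  · have := Nat.lt_floor_add_one (2 * c * y ^ k + 1)
    push_cast
    exact this
  · set h : ℕ := ⌊2 * c * y ^ k + 1⌋₊ + 1 with hh
    have hyk : 1 ≤ y ^ k := one_le_pow₀ hy1
    have hh1 : (h : ℝ) ≤ (2 * c + 2) * y ^ k := by
      have := Nat.floor_le (a := 2 * c * y ^ k + 1) (by positivity)
      rw [hh]
      push_cast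
      linarith
    have hh2 : (1 : ℝ) ≤ h := by rw [hh]; push_cast; linarith [Nat.cast_nonneg (α := ℝ) ⌊2 * c * y ^ k + 1⌋₊]
    have h1 : 16 * ((h : ℝ) * (1 + h * y)) ≤ 32 * ((h : ℝ) ^ 2 * y) := by nlinarith
    have h2 : (h : ℝ) ^ 2 * y ≤ ((2 * c + 2) * y ^ k) ^ 2 * y := by gcongr
    have h3 : ((2 * c + 2) * y ^ k) ^ 2 * y = (2 * c + 2) ^ 2 * y ^ (2 * k + 1) := by ring
    have h4 : y ^ (2 * k + 1) ≤ (n : ℝ) ^ (1 - α) := by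
      calc y ^ (2 * k + 1) ≤ ((n : ℝ) ^ α) ^ (2 * k + 1) := by gcongr
        _ = (n : ℝ) ^ (1 - α) := by
          rw [← Real.rpow_natCast, ← Real.rpow_mul hnp.le]
          congr 1
          rw [hα]
          push_cast
          field_simp
          ring
    calc 16 * ((h : ℝ) * (1 + h * y)) ≤ 32 * ((h : ℝ) ^ 2 * y) := h1
      _ ≤ 32 * ((2 * c + 2) ^ 2 * y ^ (2 * k + 1)) := by rw [← h3]; gcongr
      _ ≤ 32 * ((2 * c + 2) ^ 2 * (n : ℝ) ^ (1 - α)) := by gcongr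
      _ = (32 * (2 * c + 2) ^ 2) * (n : ℝ) ^ (1 - α) := by ring
      _ ≤ (n : ℝ) ^ (α - γ) * (n : ℝ) ^ (1 - α) := by gcongr
      _ = (n : ℝ) ^ (-γ + 1) := by rw [← Real.rpow_add hnp]; congr 1; ring
      _ = g⁻¹ * n := by rw [Real.rpow_add hnp, hg, Real.rpow_one]

/-- the clique-minor bound inside `X` -/
def MinorBd {V : Type} (H : SimpleGraph V) (X : Finset V) (k : ℕ) (c : ℝ) : Prop :=
  ∀ r F, Fam H X r F → (F.card : ℝ) ≤ 2 * c * ((r : ℝ) + 1) ^ k + 1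

lemma MinorBd.mono {V : Type} {H : SimpleGraph V} {X Y : Finset V} {k : ℕ} {c : ℝ}
    (h : MinorBd H X k c) (hY : Y ⊆ X) : MinorBd H Y k c := by
  intro r F hF
  exact h r F ⟨fun Z hZ => (hF.sub Z hZ).trans hY, hF.shal, hF.disj, hF.adj⟩

lemma sep (k : ℕ) (c : ℝ) (hc : 0 < c) :
    ∃ n0 : ℕ, 1 ≤ n0 ∧ ∀ (V : Type) [Fintype V] (H : SimpleGraph V) (X : Finset V),
      MinorBd H X k c → n0 ≤ X.card → ∃ A ⊆ X, A.Nonempty ∧ 4 * A.card ≤ 3 * X.card ∧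
        ((bdy H X A).card : ℝ) ≤ (X.card : ℝ) ^ (-(1 / (2 * (k : ℝ) + 6))) * A.card ∧
        (X.card : ℝ) ^ (-(1 / (2 * (k : ℝ) + 6))) ≤ 1 / 8 := by
  obtain ⟨n0, hn0, h⟩ := num_sep k c hc
  refine ⟨n0, hn0, ?_⟩
  intro V _ H X hX hcard
  obtain ⟨h8, t, hh, h1, h2, h3⟩ := h X.card hcard
  by_contra hcon
  push Not at hcon
  have hpos : 0 < X.card := by omega
  refine sep_comb H X _ t hh (by positivity) (h8.trans (by norm_num)) ?_ ?_ h1 h3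
    (Finset.card_pos.1 hpos)
  · intro A hA hne h4
    by_contra hlt
    push Not at hlt
    exact absurd h8 (not_le.2 (hcon A hA hne h4 hlt))
  · intro F hF
    have := hX _ F hF
    exact_mod_cast this.trans_lt h2

lemma num_step (a γ δ m n1 n2 s q1 q2 : ℝ) (hγ : 0 < γ) (ha : a = 2 / ((7 / 8 : ℝ) ^ (-γ) - 1))
    (hδ1 : δ ≤ 1) (hm : 0 < m) (hs0 : 0 ≤ s)
    (hsum : n1 + n2 = m + s) (hn1 : 0 ≤ n1) (hn2 : 0 ≤ n2)
    (hs : s ≤ m ^ (-γ) * n1)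
    (hq1 : q1 ≤ δ - a * (7 / 8 * m) ^ (-γ)) (hq2 : q2 ≤ δ - a * m ^ (-γ)) :
    n1 * (1 + q1) + n2 * (1 + q2) ≤ m * (1 + (δ - a * m ^ (-γ))) := by
  have h78 : 1 < (7 / 8 : ℝ) ^ (-γ) := by
    apply Real.one_lt_rpow_of_pos_of_lt_one_of_neg <;> [norm_num; norm_num; linarith]
  have ha0 : 0 < a := by rw [ha]; apply div_pos <;> linarith
  have hmul : (7 / 8 * m) ^ (-γ) = (7 / 8 : ℝ) ^ (-γ) * m ^ (-γ) :=
    Real.mul_rpow (by norm_num) hm.le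
  have hae : a * ((7 / 8 : ℝ) ^ (-γ) - 1) = 2 := by
    rw [ha]; field_simp [show (7 / 8 : ℝ) ^ (-γ) - 1 ≠ 0 by linarith]
  set u := m ^ (-γ) with hu
  have hu0 : 0 < u := by positivity
  have hau : a * (7 / 8 * m) ^ (-γ) = a * u + 2 * u := by
    rw [hmul]; linear_combination u * hae
  rw [hau] at hq1
  set Q := δ - a * u with hQ
  have hq1' : q1 ≤ Q - 2 * u := by linarith
  have hau0 : 0 < a * u := by positivity
  have hQ1 : Q ≤ 1 := by linarith
  have e1 : n1 * q1 ≤ n1 * (Q - 2 * u) := by gcongr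
  have e2 : n2 * q2 ≤ n2 * Q := by gcongr
  have e3 : s * Q ≤ s := by nlinarith
  have e4 : n2 = m + s - n1 := by linarith
  rw [e4] at e2 ⊢
  nlinarith

lemma cover (k : ℕ) (c : ℝ) (hc : 0 < c) :
    ∃ C : ℝ, 0 < C ∧ ∀ (V : Type) [Fintype V] (H : SimpleGraph V) (δ : ℝ) (K : ℕ),
      0 < δ → δ ≤ 1 → C * δ⁻¹ ^ (2 * k + 6) ≤ K →
      ∀ X : Finset V, MinorBd H X k c →
      ∃ (ι : Type) (_ : Fintype ι) (P : ι → Finset V),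
        (∀ i, P i ⊆ X) ∧ (∀ i, (P i).card ≤ K) ∧ (∀ x ∈ X, ∃ i, x ∈ P i) ∧
        (∀ x ∈ X, ∀ y ∈ X, H.Adj x y → ∃ i, x ∈ P i ∧ y ∈ P i) ∧
        ((∑ i, (P i).card : ℕ) : ℝ) ≤ (1 + δ) * X.card := by
  classical
  obtain ⟨n0, hn0, hsep⟩ := sep k c hc
  set γ : ℝ := 1 / (2 * (k : ℝ) + 6) with hγ
  have hγ0 : 0 < γ := by positivity
  set a : ℝ := 2 / ((7 / 8 : ℝ) ^ (-γ) - 1) with ha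
  have h78 : 1 < (7 / 8 : ℝ) ^ (-γ) := by
    apply Real.one_lt_rpow_of_pos_of_lt_one_of_neg <;> [norm_num; norm_num; linarith]
  have ha0 : 0 < a := by rw [ha]; apply div_pos <;> linarith
  refine ⟨max n0 (8 / 7 * a ^ (2 * k + 6)), lt_max_of_lt_right (by positivity), ?_⟩
  intro V _ H δ K hδ hδ1 hK
  have hd1 : 1 ≤ δ⁻¹ ^ (2 * k + 6) := one_le_pow₀ ((one_le_inv₀ hδ).2 hδ1)
  have hKn : n0 ≤ K := by
    have h1 : (n0 : ℝ) ≤ max (n0 : ℝ) (8 / 7 * a ^ (2 * k + 6)) := le_max_left _ _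
    have h2 : (n0 : ℝ) ≤ K := by
      refine le_trans ?_ hK
      have : (0 : ℝ) ≤ n0 := by positivity
      nlinarith
    exact_mod_cast h2
  have hKa : 8 / 7 * a ^ (2 * k + 6) * δ⁻¹ ^ (2 * k + 6) ≤ K := by
    refine le_trans ?_ hK
    gcongr
    exact le_max_right _ _
  have hbig : ∀ m : ℝ, (K : ℝ) ≤ m → a * (7 / 8 * m) ^ (-γ) ≤ δ := by
    intro m hm
    have h1 : (a * δ⁻¹) ^ (2 * k + 6) ≤ 7 / 8 * m := by
      rw [mul_pow]; linarith
    have h2 : a * δ⁻¹ ≤ (7 / 8 * m) ^ γ := by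
      have h3 := Real.rpow_le_rpow (by positivity) h1 hγ0.le
      rw [← Real.rpow_natCast, ← Real.rpow_mul (by positivity)] at h3
      have : ((2 * k + 6 : ℕ) : ℝ) * γ = 1 := by
        rw [hγ]; push_cast; field_simp
      rwa [this, Real.rpow_one] at h3
    have hm0 : 0 ≤ 7 / 8 * m := le_trans (by positivity) h1
    rw [Real.rpow_neg hm0]
    have h4 : 0 < (7 / 8 * m) ^ γ := lt_of_lt_of_le (by positivity) h2
    rw [← div_eq_mul_inv, div_le_iff₀ h4]
    calc a = δ * (a * δ⁻¹) := by field_simp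
      _ ≤ _ := by gcongr
  -- stronger statement
  suffices hmain : ∀ N : ℕ, ∀ X : Finset V, X.card = N → MinorBd H X k c →
      ∃ (ι : Type) (_ : Fintype ι) (P : ι → Finset V),
        (∀ i, P i ⊆ X) ∧ (∀ i, (P i).card ≤ K) ∧ (∀ x ∈ X, ∃ i, x ∈ P i) ∧
        (∀ x ∈ X, ∀ y ∈ X, H.Adj x y → ∃ i, x ∈ P i ∧ y ∈ P i) ∧
        ((∑ i, (P i).card : ℕ) : ℝ) ≤ X.card * (1 + max 0 (δ - a * (X.card : ℝ) ^ (-γ))) by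
    intro X hX
    obtain ⟨ι, hι, P, h1, h2, h3, h4, h5⟩ := hmain _ X rfl hX
    refine ⟨ι, hι, P, h1, h2, h3, h4, h5.trans ?_⟩
    rw [mul_comm]
    gcongr
    apply max_le hδ.le
    have : 0 ≤ a * (X.card : ℝ) ^ (-γ) := by positivity
    linarith
  intro N
  induction N using Nat.strong_induction_on with
  | _ N ih =>
  intro X hXN hX
  by_cases hXK : X.card ≤ K
  · refine ⟨Unit, inferInstance, fun _ => X, by simp, by simpa using hXK, fun x hx => ⟨(), hx⟩,
      fun x hx y hy _ => ⟨(), hx, hy⟩, ?_⟩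
    simp only [Finset.univ_unique, Finset.sum_const, Finset.card_singleton, one_smul]
    have h1 : 0 ≤ max 0 (δ - a * (X.card : ℝ) ^ (-γ)) := le_max_left _ _
    have h2 : (0 : ℝ) ≤ X.card := by positivity
    nlinarith
  push Not at hXK
  obtain ⟨A, hAX, hAne, hA34, hbd, h8⟩ := hsep V H X hX (by omega)
  set s := (bdy H X A).card with hs
  have hApos := hAne.card_pos
  have hbX : bdy H X A ⊆ X := Finset.filter_subset _ _
  have hdis : Disjoint A (bdy H X A) := by
    rw [Finset.disjoint_left]
    intro x hx hx'
    exact (mem_bdy.1 hx').2.1 hx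
  have hc1 : (A ∪ bdy H X A).card = A.card + s := Finset.card_union_of_disjoint hdis
  have hc2 : (X \ A).card + A.card = X.card := Finset.card_sdiff_add_card_eq_card hAX
  have hmpos : (0 : ℝ) < X.card := by exact_mod_cast (by omega : 0 < X.card)
  have hA34' : 4 * (A.card : ℝ) ≤ 3 * X.card := by exact_mod_cast hA34
  have hs8 : (s : ℝ) ≤ 1 / 8 * A.card := hbd.trans (by gcongr)
  have hn1r : (((A ∪ bdy H X A).card : ℕ) : ℝ) ≤ 7 / 8 * X.card := by
    rw [hc1]; push_cast; linarith
  have hn1lt : (A ∪ bdy H X A).card < X.card := by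
    have : (((A ∪ bdy H X A).card : ℕ) : ℝ) < X.card := by linarith
    exact_mod_cast this
  have hX1 : A ∪ bdy H X A ⊆ X := Finset.union_subset hAX hbX
  obtain ⟨ι1, i1, P1, a1, a2, a3, a4, a5⟩ := ih _ (hXN ▸ hn1lt) _ rfl (hX.mono hX1)
  obtain ⟨ι2, i2, P2, b1, b2, b3, b4, b5⟩ := ih _ (by omega) (X \ A) rfl (hX.mono Finset.sdiff_subset)
  refine ⟨ι1 ⊕ ι2, inferInstance, Sum.elim P1 P2, ?_, ?_, ?_, ?_, ?_⟩
  · rintro (i | i)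
    · exact (a1 i).trans hX1
    · exact (b1 i).trans Finset.sdiff_subset
  · rintro (i | i)
    · exact a2 i
    · exact b2 i
  · intro x hx
    by_cases hxA : x ∈ A
    · obtain ⟨i, hi⟩ := a3 x (Finset.mem_union_left _ hxA)
      exact ⟨.inl i, hi⟩
    · obtain ⟨i, hi⟩ := b3 x (Finset.mem_sdiff.2 ⟨hx, hxA⟩)
      exact ⟨.inr i, hi⟩
  · have key : ∀ x ∈ A, ∀ y ∈ X, H.Adj x y → y ∈ A ∪ bdy H X A := by
      intro x hx y hy hxy
      by_cases hyA : y ∈ A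
      · exact Finset.mem_union_left _ hyA
      · exact Finset.mem_union_right _ (mem_bdy.2 ⟨hy, hyA, x, hx, hxy⟩)
    intro x hx y hy hxy
    by_cases hxA : x ∈ A
    · obtain ⟨i, hi⟩ := a4 x (Finset.mem_union_left _ hxA) y (key x hxA y hy hxy) hxy
      exact ⟨.inl i, hi⟩
    by_cases hyA : y ∈ A
    · obtain ⟨i, hi⟩ := a4 x (key y hyA x hx hxy.symm) y (Finset.mem_union_left _ hyA) hxy
      exact ⟨.inl i, hi⟩
    · obtain ⟨i, hi⟩ := b4 x (Finset.mem_sdiff.2 ⟨hx, hxA⟩) y (Finset.mem_sdiff.2 ⟨hy, hyA⟩) hxy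
      exact ⟨.inr i, hi⟩
  · rw [Fintype.sum_sum_type]
    simp only [Sum.elim_inl, Sum.elim_inr]
    rw [Nat.cast_add]
    refine (add_le_add a5 b5).trans ?_
    have hKm : (K : ℝ) ≤ X.card := by exact_mod_cast hXK.le
    have hb := hbig X.card hKm
    have hn1pos : (0 : ℝ) < ((A ∪ bdy H X A).card : ℕ) := by
      have : 0 < (A ∪ bdy H X A).card := by omega
      exact_mod_cast this
    have mono : ∀ x y : ℝ, 0 < x → x ≤ y → a * y ^ (-γ) ≤ a * x ^ (-γ) := by
      intro x y hx hxy
      have := Real.rpow_le_rpow_of_nonpos hx hxy (by linarith : -γ ≤ 0)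
      gcongr
    have hb' : a * (X.card : ℝ) ^ (-γ) ≤ δ := (mono _ _ (by positivity) (by linarith)).trans hb
    have hn2pos : (0 : ℝ) < ((X \ A).card : ℕ) := by
      have : 0 < (X \ A).card := by omega
      exact_mod_cast this
    have hn2le : (((X \ A).card : ℕ) : ℝ) ≤ X.card := by
      exact_mod_cast Finset.card_le_card Finset.sdiff_subset
    have step := num_step a γ δ X.card ((A ∪ bdy H X A).card : ℕ) ((X \ A).card : ℕ) s
      (max 0 (δ - a * (((A ∪ bdy H X A).card : ℕ) : ℝ) ^ (-γ)))
      (max 0 (δ - a * (((X \ A).card : ℕ) : ℝ) ^ (-γ))) hγ0 ha hδ1 hmpos (by positivity)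
      ?_ hn1pos.le hn2pos.le ?_ ?_ ?_
    · refine step.trans ?_
      gcongr
      exact le_max_right _ _
    · have : (A ∪ bdy H X A).card + (X \ A).card = X.card + s := by omega
      exact_mod_cast this
    · refine hbd.trans ?_
      gcongr
      exact Finset.subset_union_left
    · apply max_le
      · linarith
      · linarith [mono _ _ hn1pos hn1r]
    · apply max_le
      · linarith
      · linarith [mono _ _ hn2pos hn2le]

lemma lift_walk {V : Type} {G H : SimpleGraph V} {cl : V → Set V} {T : Set V}
    (hself : ∀ a ∈ T, a ∈ cl a) (hstar : ∀ a, ∀ b ∈ cl a, b = a ∨ G.Adj a b)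
    (hH : ∀ a b, H.Adj a b → ∃ u ∈ cl a, ∃ v ∈ cl b, G.Adj u v) {x y : V} (p : H.Walk x y) :
    (∀ z ∈ p.support, z ∈ T) → Rch G (⋃ z ∈ T, cl z) (3 * p.length) x y := by
  have hcl : ∀ a ∈ T, ∀ b ∈ cl a, b ∈ ⋃ z ∈ T, cl z := by
    intro a ha b hb
    simp only [Set.mem_iUnion]
    exact ⟨a, ha, hb⟩
  have hst : ∀ a ∈ T, ∀ b ∈ cl a, Rch G (⋃ z ∈ T, cl z) 1 a b := by
    intro a ha b hb
    rcases hstar a b hb with rfl | h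
    · exact Rch.refl (hcl _ ha _ hb)
    · exact Rch.step (hcl _ ha _ (hself a ha)) (hcl _ ha _ hb) h
  induction p with
  | nil =>
    intro h
    have hu := h _ (SimpleGraph.Walk.start_mem_support _)
    exact Rch.refl (hcl _ hu _ (hself _ hu))
  | @cons u v w huv p ih =>
    intro h
    have hu : u ∈ T := h u (by simp)
    have hv : v ∈ T := h v (by simp)
    have ih' := ih (fun z hz => h z (by simp [hz]))
    obtain ⟨u', hu', v', hv', huv'⟩ := hH u v huv
    have h1 := hst u hu u' hu'
    have h2 := (hst v hv v' hv').symm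
    have h3 := Rch.step (hcl _ hu _ hu') (hcl _ hv _ hv') huv'
    exact (((h1.trans h3).trans h2).trans ih').mono le_rfl (by simp; omega)

lemma minorBd_of_nabla {V : Type} {G H : SimpleGraph V} {cl : V → Set V} {T : Finset V}
    (k : ℕ) (c : ℝ) (hc : 0 < c) (hG : ∀ r : ℕ, NablaLE G r (c * ((r : ℝ) + 1) ^ k))
    (hself : ∀ a ∈ T, a ∈ cl a) (hstar : ∀ a, ∀ b ∈ cl a, b = a ∨ G.Adj a b)
    (hdisj : ∀ a ∈ T, ∀ b ∈ T, a ≠ b → Disjoint (cl a) (cl b))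
    (hH : ∀ a b, H.Adj a b → ∃ u ∈ cl a, ∃ v ∈ cl b, G.Adj u v) :
    MinorBd H T k (c * 3 ^ k) := by
  classical
  intro r F hF
  have h := hG (3 * r + 1) F (⊤ : SimpleGraph F) ?_
  · have hcard : ((⊤ : SimpleGraph F).edgeSet.ncard) = F.card.choose 2 := by
      rw [Set.ncard_eq_toFinset_card', ← SimpleGraph.edgeFinset,
        SimpleGraph.card_edgeFinset_top_eq_card_choose_two, Fintype.card_coe]
    rw [hcard, Nat.cast_choose_two, Fintype.card_coe] at h
    have h2 : (((3 * r + 1 : ℕ) : ℝ) + 1) ^ k ≤ 3 ^ k * ((r : ℝ) + 1) ^ k := by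
      rw [← mul_pow]
      push_cast
      gcongr
      linarith
    have h3 : c * (((3 * r + 1 : ℕ) : ℝ) + 1) ^ k ≤ c * (3 ^ k * ((r : ℝ) + 1) ^ k) := by gcongr
    by_cases h0 : F.card = 0
    · rw [h0]
      push_cast
      positivity
    · have hpos : (0 : ℝ) < F.card := by exact_mod_cast Nat.pos_of_ne_zero h0
      have h4 : (F.card : ℝ) * ((F.card - 1) / 2) ≤ F.card * (c * (3 ^ k * ((r : ℝ) + 1) ^ k)) := by
        have : c * (((3 * r + 1 : ℕ) : ℝ) + 1) ^ k * F.card ≤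
          c * (3 ^ k * ((r : ℝ) + 1) ^ k) * F.card := by gcongr
        linarith
      have h5 := le_of_mul_le_mul_left h4 hpos
      linarith
  · refine ⟨fun Z => ⋃ z ∈ (Z.1 : Set V), cl z, ?_, ?_, ?_⟩
    · intro Z Z' hne
      rw [Set.disjoint_left]
      intro x hx hx'
      simp only [Set.mem_iUnion] at hx hx'
      obtain ⟨z, hz, hxz⟩ := hx
      obtain ⟨z', hz', hxz'⟩ := hx'
      have hd := hF.disj Z.1 Z.2 Z'.1 Z'.2 (fun h => hne (Subtype.ext h))
      have hzz : z ≠ z' := by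
        rintro rfl
        exact Finset.disjoint_left.1 hd hz hz'
      exact Set.disjoint_left.1 (hdisj z (hF.sub _ Z.2 hz) z' (hF.sub _ Z'.2 hz') hzz) hxz hxz'
    · intro Z
      obtain ⟨v, hv, hZ⟩ := hF.shal Z.1 Z.2
      have hself' : ∀ a ∈ (Z.1 : Set V), a ∈ cl a := fun a ha => hself a (hF.sub _ Z.2 ha)
      refine shallow_of_rch (v := v) ?_ ?_
      · simp only [Set.mem_iUnion]
        exact ⟨v, hv, hself' v hv⟩
      · intro x hx
        have hx0 := hx
        simp only [Set.mem_iUnion] at hx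
        obtain ⟨z, hz, hxz⟩ := hx
        obtain ⟨p, hp, hps⟩ := hZ z hz
        have h1 := lift_walk hself' hstar hH p hps
        have h2 : Rch G (⋃ z ∈ (Z.1 : Set V), cl z) 1 z x := by
          rcases hstar z x hxz with rfl | h
          · exact Rch.refl hx0
          · exact Rch.step h1.mem_right hx0 h
        exact (h1.trans h2).mono le_rfl (by omega)
    · intro Z Z' hne
      obtain ⟨x, hx, y, hy, hxy⟩ := hF.adj Z.1 Z.2 Z'.1 Z'.2 (fun h => hne (Subtype.ext h))
      obtain ⟨u, hu, v, hv, huv⟩ := hH x y hxy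
      refine ⟨u, ?_, v, ?_, huv⟩
      · simp only [Set.mem_iUnion]
        exact ⟨x, hx, hu⟩
      · simp only [Set.mem_iUnion]
        exact ⟨y, hy, hv⟩

lemma count_cover {V ι : Type} [Fintype ι] [DecidableEq V] (L S : Finset V) (P I : ι → Finset V)
    (hsub : ∀ i, P i ⊆ L ∪ S) (hcov : ∀ x ∈ L ∪ S, ∃ i, x ∈ P i)
    (hI : ∀ i x, x ∈ P i → (∀ j, x ∈ P j → j = i) → x ∈ I i)
    (hle : ∀ i, (L ∩ I i).card ≤ (S ∩ P i).card) :
    L.card + 2 * (L ∪ S).card ≤ S.card + 2 * ∑ i, (P i).card := by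
  classical
  let m : V → ℕ := fun x => ∑ i, if x ∈ P i then 1 else 0
  have hsw : ∀ (A : Finset V) (Q : ι → Finset V),
      ∑ i, (A ∩ Q i).card = ∑ x ∈ A, ∑ i, if x ∈ Q i then 1 else 0 := by
    intro A Q
    rw [Finset.sum_comm]
    refine Finset.sum_congr rfl fun i _ => ?_
    rw [← Finset.card_filter, Finset.filter_mem_eq_inter]
  have hP : ∑ i, (P i).card = ∑ x ∈ L ∪ S, m x := by
    rw [← hsw]
    refine Finset.sum_congr rfl fun i _ => ?_
    rw [Finset.inter_eq_right.2 (hsub i)]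
  have hm1 : ∀ x ∈ L ∪ S, 1 ≤ m x := by
    intro x hx
    obtain ⟨i, hi⟩ := hcov x hx
    have := Finset.single_le_sum (f := fun i => if x ∈ P i then 1 else 0)
      (fun _ _ => Nat.zero_le _) (Finset.mem_univ i)
    simp only [hi, if_true] at this
    exact this
  have hE : ∑ x ∈ L ∪ S, m x = ∑ x ∈ L ∪ S, (m x - 1) + (L ∪ S).card := by
    rw [Finset.card_eq_sum_ones, ← Finset.sum_add_distrib]
    refine Finset.sum_congr rfl fun x hx => ?_
    have := hm1 x hx
    omega
  have hL : L.card ≤ ∑ i, (L ∩ I i).card + ∑ x ∈ L ∪ S, (m x - 1) := by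
    have h1 : ∑ x ∈ L, (m x - 1) ≤ ∑ x ∈ L ∪ S, (m x - 1) :=
      Finset.sum_le_sum_of_subset Finset.subset_union_left
    have h2 : L.card ≤ ∑ i, (L ∩ I i).card + ∑ x ∈ L, (m x - 1) := by
      rw [hsw, ← Finset.sum_add_distrib, Finset.card_eq_sum_ones]
      refine Finset.sum_le_sum fun x hx => ?_
      have hx1 := hm1 x (Finset.mem_union_left _ hx)
      by_cases h2 : 2 ≤ m x
      · omega
      · have hmx : m x = 1 := by omega
        obtain ⟨i, hi⟩ := hcov x (Finset.mem_union_left _ hx)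
        have hxI : x ∈ I i := by
          refine hI i x hi ?_
          intro j hj
          by_contra hne
          have : ∑ l ∈ ({j, i} : Finset ι), (if x ∈ P l then 1 else 0) ≤ m x :=
            Finset.sum_le_sum_of_subset (Finset.subset_univ _)
          rw [Finset.sum_pair hne] at this
          simp [hi, hj] at this
          omega
        have := Finset.single_le_sum (f := fun i => if x ∈ I i then 1 else 0)
          (fun _ _ => Nat.zero_le _) (Finset.mem_univ i)
        simp only [hxI, if_true] at this
        omega
    omega
  have hS : ∑ i, (S ∩ P i).card ≤ S.card + ∑ x ∈ L ∪ S, (m x - 1) := by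
    have h1 : ∑ x ∈ S, (m x - 1) ≤ ∑ x ∈ L ∪ S, (m x - 1) :=
      Finset.sum_le_sum_of_subset Finset.subset_union_right
    have h2 : ∑ i, (S ∩ P i).card ≤ S.card + ∑ x ∈ S, (m x - 1) := by
      rw [hsw, Finset.card_eq_sum_ones, ← Finset.sum_add_distrib]
      refine Finset.sum_le_sum fun x hx => ?_
      have := hm1 x (Finset.mem_union_right _ hx)
      change m x ≤ _
      omega
    omega
  have hsum : ∑ i, (L ∩ I i).card ≤ ∑ i, (S ∩ P i).card := Finset.sum_le_sum fun i _ => hle i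
  omega

lemma choose_dom {V : Type} {G : SimpleGraph V} {D W : Set V} (h : Dominates G D W) :
    ∃ f : V → V, ∀ w ∈ W, f w ∈ D ∧ (w ∈ D → f w = w) ∧ (w ∉ D → G.Adj (f w) w) := by
  have : ∀ w, ∃ u, w ∈ W → u ∈ D ∧ (w ∈ D → u = w) ∧ (w ∉ D → G.Adj u w) := by
    intro w
    by_cases hw : w ∈ W
    · rcases h w hw with hD | ⟨u, hu, huw⟩
      · exact ⟨w, fun _ => ⟨hD, fun _ => rfl, fun h => absurd hD h⟩⟩
      · by_cases hD : w ∈ D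
        · exact ⟨w, fun _ => ⟨hD, fun _ => rfl, fun h => absurd hD h⟩⟩
        · exact ⟨u, fun _ => ⟨hu, fun h => absurd h hD, fun _ => huw⟩⟩
    · exact ⟨w, fun h => absurd h hw⟩
  choose f hf using this
  exact ⟨f, fun w hw => hf w hw⟩

lemma dom_of {V : Type} {G : SimpleGraph V} {L' : Set V} {w u : V} {D : Set V}
    (hu : u ∈ L') (h1 : w ∈ D → u = w) (h2 : w ∉ D → G.Adj u w) :
    w ∈ L' ∨ ∃ u ∈ L', G.Adj u w := by
  by_cases hw : w ∈ D
  · left; rw [← h1 hw]; exact hu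
  · right; exact ⟨u, hu, h2 hw⟩

/-- PTAS via local search for the dominating subset problem on graphs with
polynomial expansion `∇_r(G) ≤ c(r+1)^k`:  every `K`-locally minimal `L ⊆ D` dominating `W`
with `K = ⌈C·ε^{-(2k+6)}(1+log(1/ε))^{2k+5}⌉` is a `(1+ε)`-approximation. -/
theorem stmt16 (k : ℕ) (hk : 1 ≤ k) (c : ℝ) (hc : 0 < c) :
    ∃ C : ℝ, 0 < C ∧
      ∀ (V : Type) [Fintype V] (G : SimpleGraph V),
        (∀ r : ℕ, NablaLE G r (c * ((r : ℝ) + 1) ^ k)) →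
        ∀ (W D : Set V), Dominates G D W →
        ∀ ε : ℝ, 0 < ε → ε < 1 →
          ∀ L ⊆ D, Dominates G L W →
            (¬ ∃ L' ⊆ D, Dominates G L' W ∧
              (symmDiff L L').ncard ≤
                ⌈C * ε⁻¹ ^ (2 * k + 6) * (1 + Real.log (1 / ε)) ^ (2 * k + 5)⌉₊ ∧
              L'.ncard < L.ncard) →
            ∀ S ⊆ D, Dominates G S W →
              (L.ncard : ℝ) ≤ (1 + ε) * (S.ncard : ℝ) := by
  classical
  obtain ⟨C, hC, hcover⟩ := cover k (c * 3 ^ k) (by positivity)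
  refine ⟨C * 6 ^ (2 * k + 6), by positivity, ?_⟩
  intro V _ G hG W D _ ε hε hε1 L hLD hLW hmin S hSD hSW
  obtain ⟨L, rfl⟩ : ∃ f : Finset V, (f : Set V) = L := ⟨L.toFinset, by simp⟩
  obtain ⟨S, rfl⟩ : ∃ f : Finset V, (f : Set V) = S := ⟨S.toFinset, by simp⟩
  set K := ⌈C * 6 ^ (2 * k + 6) * ε⁻¹ ^ (2 * k + 6) * (1 + Real.log (1 / ε)) ^ (2 * k + 5)⌉₊ with hK
  obtain ⟨l, hl⟩ := choose_dom hLW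
  obtain ⟨s, hs⟩ := choose_dom hSW
  let cl : V → Set V := fun a => {b | b = a ∨ (b ∉ L ∪ S ∧ b ∈ W ∧ s b = a)}
  have hself : ∀ a, a ∈ cl a := fun a => Or.inl rfl
  let H : SimpleGraph V :=
    { Adj := fun a b => a ≠ b ∧ ∃ u ∈ cl a, ∃ v ∈ cl b, G.Adj u v
      symm := ⟨by
        rintro a b ⟨hne, u, hu, v, hv, huv⟩
        exact ⟨hne.symm, v, hv, u, hu, huv.symm⟩⟩
      loopless := ⟨fun a h => h.1 rfl⟩ }
  have hM : MinorBd H (L ∪ S) k (c * 3 ^ k) := by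
    refine minorBd_of_nabla (G := G) (cl := cl) k c hc hG (fun a _ => hself a) ?_ ?_ ?_
    · rintro a b (rfl | ⟨hb, hbW, rfl⟩)
      · exact Or.inl rfl
      · right
        refine (hs b hbW).2.2 ?_
        intro hbS
        exact hb (Finset.mem_union_right _ hbS)
    · intro a ha b hb hab
      rw [Set.disjoint_left]
      rintro x (rfl | ⟨hx, hxW, rfl⟩) (h | ⟨hx', hxW', h⟩)
      · exact hab h
      · exact hx' ha
      · subst h
        exact hx hb
      · exact hab h
    · intro a b h
      exact h.2
  have hedge : ∀ w ∈ W, s w = l w ∨ H.Adj (s w) (l w) := by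
    intro w hw
    by_cases heq : s w = l w
    · exact Or.inl heq
    right
    refine ⟨heq, ?_⟩
    obtain ⟨s1, s2, s3⟩ := hs w hw
    obtain ⟨l1, l2, l3⟩ := hl w hw
    by_cases hwL : w ∈ (L : Set V)
    · have hwS : w ∉ (S : Set V) := fun h => heq ((s2 h).trans (l2 hwL).symm)
      refine ⟨s w, hself _, l w, hself _, ?_⟩
      rw [l2 hwL]
      exact s3 hwS
    · by_cases hwS : w ∈ (S : Set V)
      · refine ⟨s w, hself _, l w, hself _, ?_⟩
        rw [s2 hwS]
        exact (l3 hwL).symm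
      · refine ⟨w, Or.inr ⟨?_, hw, rfl⟩, l w, hself _, (l3 hwL).symm⟩
        rw [Finset.mem_union, not_or]
        exact ⟨hwL, hwS⟩
  obtain ⟨ι, _, P, p1, p2, p3, p4, p5⟩ := hcover V H (ε / 6) K (by positivity) (by linarith) (by
    refine le_trans ?_ (Nat.le_ceil _)
    have h0 : 0 ≤ Real.log (1 / ε) := Real.log_nonneg (by rw [le_div_iff₀ hε]; linarith)
    have h1 : 1 ≤ (1 + Real.log (1 / ε)) ^ (2 * k + 5) := one_le_pow₀ (by linarith)
    have h2 : (ε / 6)⁻¹ = 6 * ε⁻¹ := by field_simp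
    rw [h2, mul_pow, ← mul_assoc]
    exact le_mul_of_one_le_right (by positivity) h1) (L ∪ S) hM
  let I : ι → Finset V := fun i => (P i).filter (fun x => ∀ j, x ∈ P j → j = i)
  have hcount := count_cover L S P I p1 p3 (fun i x hx h => Finset.mem_filter.2 ⟨hx, h⟩) (by
    intro i
    by_contra hlt
    push Not at hlt
    refine hmin ⟨(((L \ I i) ∪ (S ∩ P i) : Finset V) : Set V), ?_, ?_, ?_, ?_⟩
    · intro x hx
      simp only [Finset.coe_union, Finset.coe_sdiff, Finset.coe_inter] at hx
      rcases hx with hx | hx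
      · exact hLD hx.1
      · exact hSD hx.1
    · intro w hw
      obtain ⟨s1, s2, s3⟩ := hs w hw
      obtain ⟨l1, l2, l3⟩ := hl w hw
      by_cases hI : l w ∈ I i
      · refine dom_of (u := s w) ?_ s2 s3
        obtain ⟨hli, hlj⟩ := Finset.mem_filter.1 hI
        refine Finset.mem_coe.2 (Finset.mem_union_right _ (Finset.mem_inter.2 ⟨s1, ?_⟩))
        rcases hedge w hw with h | h
        · rw [h]; exact hli
        · obtain ⟨j, hj1, hj2⟩ := p4 _ (Finset.mem_union_right _ s1) _
            (Finset.mem_union_left _ l1) h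
          rw [← hlj j hj2]
          exact hj1
      · refine dom_of (u := l w) ?_ l2 l3
        exact Finset.mem_coe.2 (Finset.mem_union_left _ (Finset.mem_sdiff.2 ⟨l1, hI⟩))
    · rw [← Finset.coe_symmDiff, Set.ncard_coe_finset]
      refine (Finset.card_le_card ?_).trans (p2 i)
      intro x hx
      rw [Finset.mem_symmDiff] at hx
      simp only [Finset.mem_union, Finset.mem_sdiff, Finset.mem_inter] at hx
      by_contra hxP
      have : x ∉ I i := fun h => hxP (Finset.mem_filter.1 h).1
      tauto
    · rw [Set.ncard_coe_finset, Set.ncard_coe_finset]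
      have h1 := Finset.card_union_le (L \ I i) (S ∩ P i)
      have h2 := Finset.card_sdiff_add_card_inter L (I i)
      omega)
  rw [Set.ncard_coe_finset, Set.ncard_coe_finset]
  have h1 : (L.card : ℝ) + 2 * (L ∪ S).card ≤ S.card + 2 * ((∑ i, (P i).card : ℕ) : ℝ) := by
    exact_mod_cast hcount
  have h2 : ((L ∪ S).card : ℝ) ≤ L.card + S.card := by exact_mod_cast Finset.card_union_le L S
  have h3 : (L.card : ℝ) ≤ S.card + ε / 3 * (L.card + S.card) := by nlinarith
  have hS0 : (0 : ℝ) ≤ S.card := by positivity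
  have h4 : (1 - ε / 3) * (L.card : ℝ) ≤ (1 - ε / 3) * ((1 + ε) * S.card) := by
    have : (1 + ε / 3) * (S.card : ℝ) ≤ ((1 - ε / 3) * (1 + ε)) * S.card := by
      gcongr
      nlinarith
    linarith
  exact le_of_mul_le_mul_left h4 (by linarith)
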